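/- (Traces for the cinquefoil representations, confirming the Dubois–Kashaev parametrization.) Let m, s ∈ ℂ with m ≠ 0 and s² = m, let ε ∈ {+1, −1}, and set d := m + m⁻¹ − (1 + ε√5)/2 (the two roots of d² − (2m + 2m⁻¹ − 1)d + m² − m + 1 − m⁻¹ + m⁻² = 0). Let X = [[s,1],[0,s⁻¹]], Y = [[s,0],[−d,s⁻¹]]. With g := yxyxy and h := xy (which satisfy g² = h⁵ in the cinquefoil group), the images satisfy trace(Y·X·Y·X·Y) = 0 and trace(X·Y) = (1 + ε√5)/2; that is, tr ρ₊(h) = 2cos(π/5) and tr ρ₋(h) = 2cos(3π/5), while tr ρ±(g) = 0. -/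

import Mathlib

open Matrix

/-!
Any two matrices `X`, `Y` in `SL₂` satisfy `(XY)² = τ XY - 1` with `τ = tr (XY)`, by
Cayley–Hamilton. Hence `tr (YXYXY) = τ tr (YXY) - tr Y`, and in the same way
`tr (YXY) = τ tr Y - tr X`. Here `tr X = tr Y`, as for any two conjugate meridians, so
`tr (YXYXY) = (τ² - τ - 1) tr Y`. This vanishes when `τ² = τ + 1`, and the two values of `d` are
those for which `τ = m + m⁻¹ - d` is a root of this equation.
-/

section FinTwo

variable {R : Type*} [CommRing R] (A B : Matrix (Fin 2) (Fin 2) R)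

theorem mul_self_eq_trace_smul_sub_det_smul_one_fin_two : A * A = A.trace • A - A.det • 1 := by
  nontriviality R
  have cayley_hamilton : A ^ 2 - A.trace • A + A.det • 1 = 0 := by
    simpa [charpoly_fin_two, Algebra.smul_def] using A.aeval_self_charpoly
  rw [← sq, ← sub_eq_zero, ← cayley_hamilton]
  abel

theorem trace_mul_mul_self_fin_two :
    trace (A * (B * B)) = B.trace * trace (A * B) - B.det * A.trace := by
  simp [mul_self_eq_trace_smul_sub_det_smul_one_fin_two B, mul_sub]

variable {A B}

theorem trace_mul_mul_mul_mul_fin_two_of_det_eq_one (hA : A.det = 1) (hB : B.det = 1)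
    (hAB : A.trace = B.trace) :
    trace (B * A * B * A * B) = (trace (A * B) ^ 2 - trace (A * B) - 1) * B.trace := by
  have trace_BAB : trace (B * (A * B)) = B.trace * trace (A * B) - B.trace := by
    rw [trace_mul_comm, mul_assoc, trace_mul_mul_self_fin_two, hB, hAB, one_mul]
  calc trace (B * A * B * A * B)
      = trace (B * ((A * B) * (A * B))) := by simp only [mul_assoc]
    _ = trace (A * B) * trace (B * (A * B)) - B.trace := by
      rw [trace_mul_mul_self_fin_two, det_mul, hA, hB, one_mul, one_mul]
    _ = (trace (A * B) ^ 2 - trace (A * B) - 1) * B.trace := by rw [trace_BAB]; ring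

end FinTwo

section Meridians

variable {R : Type*} [CommRing R]

/-- The image of the meridian `x` in Riley's normal form for representations of a two-bridge knot
group. Taking the eigenvalue `s` to be a unit makes sense of `s⁻¹` over any commutative ring. -/
def rileyX (s : Rˣ) : Matrix (Fin 2) (Fin 2) R := !![↑s, 1; 0, ↑s⁻¹]

/-- The image of the meridian `y` in Riley's normal form for representations of a two-bridge knot
group, with eigenvalue `s` as in `rileyX` and parameter `d`. -/
def rileyY (s : Rˣ) (d : R) : Matrix (Fin 2) (Fin 2) R := !![↑s, 0; -d, ↑s⁻¹]

variable (s : Rˣ) (d : R)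

theorem det_rileyX : (rileyX s).det = 1 := by simp [rileyX]

theorem det_rileyY : (rileyY s d).det = 1 := by simp [rileyY]

theorem trace_rileyX_eq_trace_rileyY : (rileyX s).trace = (rileyY s d).trace := by
  simp [rileyX, rileyY]

theorem trace_rileyX_mul_rileyY :
    trace (rileyX s * rileyY s d) = ↑(s ^ 2) + ↑(s ^ 2)⁻¹ - d :=
  calc trace (rileyX s * rileyY s d)
      = ↑s * ↑s - d + ↑s⁻¹ * ↑s⁻¹ := by
        simp [rileyX, rileyY, trace_fin_two, sub_eq_add_neg]
    _ = ↑(s ^ 2) + ↑(s ^ 2)⁻¹ - d := by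
        rw [← inv_pow, Units.val_pow_eq_pow_val, Units.val_pow_eq_pow_val]
        ring

end Meridians

theorem one_add_mul_sqrt_five_div_two_sq {ε : ℝ} (hε : ε = 1 ∨ ε = -1) :
    ((1 + ε * √5) / 2) ^ 2 = (1 + ε * √5) / 2 + 1 := by
  rcases hε with rfl | rfl
  · simpa only [one_mul] using Real.goldenRatio_sq
  · simpa only [neg_one_mul, ← sub_eq_add_neg] using Real.goldenConj_sq

theorem cinquefoil_traces_general {R : Type*} [CommRing R] {m s : Rˣ} {d φ : R} (hs : s ^ 2 = m)
    (hφ : φ ^ 2 = φ + 1) (hd : d = m + ↑m⁻¹ - φ) :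
    trace (rileyY s d * rileyX s * rileyY s d * rileyX s * rileyY s d) = 0 ∧
      trace (rileyX s * rileyY s d) = φ := by
  have trace_XY : trace (rileyX s * rileyY s d) = φ := by
    rw [trace_rileyX_mul_rileyY, hs, hd, sub_sub_cancel]
  refine ⟨?_, trace_XY⟩
  calc trace (rileyY s d * rileyX s * rileyY s d * rileyX s * rileyY s d)
      = (φ ^ 2 - φ - 1) * trace (rileyY s d) := by
        rw [trace_mul_mul_mul_mul_fin_two_of_det_eq_one (det_rileyX s) (det_rileyY s d)
          (trace_rileyX_eq_trace_rileyY s d), trace_XY]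
    _ = 0 := by rw [hφ, add_sub_cancel_left, sub_self, zero_mul]

/-- (Traces for the cinquefoil representations, confirming the Dubois–Kashaev
parametrization.) With `X = [[s,1],[0,s⁻¹]]`, `Y = [[s,0],[−d,s⁻¹]]`, `s² = m`,
`ε = ±1`, and `d = m + m⁻¹ − (1 + ε√5)/2` (the two roots of the quadratic
`d² − (2m + 2m⁻¹ − 1)d + m² − m + 1 − m⁻¹ + m⁻² = 0`), the images of `g = yxyxy` and
`h = xy` satisfy `trace(YXYXY) = 0` and `trace(XY) = (1 + ε√5)/2`; note
`2cos(π/5) = (1+√5)/2` and `2cos(3π/5) = (1−√5)/2`. -/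
theorem cinquefoil_traces (m d s : ℂ) (ε : ℝ) (hm : m ≠ 0) (hs : s ^ 2 = m)
    (hε : ε = 1 ∨ ε = -1)
    (hd : d = m + m⁻¹ - (1 + (ε : ℂ) * (Real.sqrt 5 : ℂ)) / 2)
    (X Y : Matrix (Fin 2) (Fin 2) ℂ)
    (hX : X = !![s, 1; 0, s⁻¹]) (hY : Y = !![s, 0; -d, s⁻¹]) :
    Matrix.trace (Y * X * Y * X * Y) = 0 ∧
      Matrix.trace (X * Y) = (1 + (ε : ℂ) * (Real.sqrt 5 : ℂ)) / 2 := by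
  have hs₀ : s ≠ 0 := (pow_ne_zero_iff two_ne_zero).mp (hs ▸ hm)
  subst hX hY
  exact cinquefoil_traces_general (m := .mk0 m hm) (s := .mk0 s hs₀) (Units.ext hs)
    (mod_cast one_add_mul_sqrt_five_div_two_sq hε) hd
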